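/- arXiv:2002.00900 — 2 statements merged into one kernel-verified Lean document; each statement's English description precedes it below -/
import Mathlib

section
/- Suppose functions H•: (finite nonempty subsets of {1,...,n}) → R and H∘: (finite nonempty subsets of {1,...,n}) → R with values in a commutative ℚ-algebra R satisfy H•(I) = Σ_{M ⊢ I} ∏_{B ∈ M} H∘(B) for every nonempty I ⊆ {1,...,n}, where the sum is over set partitions M of I. Then H∘(I) = Σ_{M ⊢ I} (−1)^{|M|−1} (|M| − 1)! · ∏_{B ∈ M} H•(B) for every nonempty I ⊆ {1,...,n}, and conversely. -/
/-!
Set functions on a finite set form a commutative algebra under subset convolution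
`(f * g)(I) = ∑_{A ⊆ I} f(A) g(I \ A)`. Summing products over set partitions is the exponential in
this algebra, so the theorem says that exponential and logarithm are mutually inverse.

The combinatorial input is `sum_block`: a set partition of `J` with a distinguished block `B` is
the same as a nonempty `B ⊆ J` together with a set partition of `J \ B`. Distinguishing the block
containing a fixed point `i` gives the recursion `sum_point`, which for the exponential reads
`exp(f)(I) = ∑_{i ∈ A ⊆ I} f(A) exp(f)(I \ A)`. Since the term `A = I` is `f(I)`, this recursion
determines `exp(f)` from `f` and conversely, so it is enough to prove it for the pair consisting of
`h` and its logarithm (`logSum_recursion`). Expanding the logarithm by `sum_point` once more,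
this reduces to the fact that `∑_M (-1)^|M| |M|! ∏ h(B)` is the convolution inverse of `1 + h`
(`invSum_mul_unitExt`), where the factor `|M|` in `|M|!` is accounted for by the choice of a
distinguished block.
-/

open Finset
open scoped Classical

/-- `M` is a set partition of the finset `I`: its blocks are nonempty, pairwise disjoint,
and their union is `I`. -/
def IsSetPartition {n : ℕ} (I : Finset (Fin n)) (M : Finset (Finset (Fin n))) : Prop :=
  (∀ B ∈ M, B.Nonempty) ∧ (∀ B ∈ M, ∀ C ∈ M, B ≠ C → Disjoint B C) ∧ M.sup id = I

namespace PartitionInversion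

variable {n : ℕ} {R : Type*} [CommRing R]

/-- The finset of all set partitions of `I`. -/
noncomputable def parts (I : Finset (Fin n)) : Finset (Finset (Finset (Fin n))) :=
  (I.powerset.powerset).filter (IsSetPartition I)

lemma sup_id_eq_iff {I : Finset (Fin n)} {M : Finset (Finset (Fin n))} :
    M.sup id = I ↔ ∀ x, x ∈ I ↔ ∃ B ∈ M, x ∈ B := by
  rw [Finset.ext_iff]
  refine forall_congr' fun x => ?_
  rw [Finset.mem_sup]
  exact comm

lemma mem_parts {I : Finset (Fin n)} {M : Finset (Finset (Fin n))} :
    M ∈ parts I ↔ (∀ B ∈ M, B.Nonempty) ∧ (∀ B ∈ M, ∀ C ∈ M, B ≠ C → Disjoint B C) ∧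
      ∀ x, x ∈ I ↔ ∃ B ∈ M, x ∈ B := by
  rw [← sup_id_eq_iff]
  refine ⟨fun h => (Finset.mem_filter.1 h).2, fun h => Finset.mem_filter.2 ⟨?_, h⟩⟩
  rw [Finset.mem_powerset]
  intro B hB
  rw [Finset.mem_powerset, ← h.2.2]
  exact Finset.le_sup (f := id) hB

lemma subset_of_mem {I B : Finset (Fin n)} {M : Finset (Finset (Fin n))} (h : M ∈ parts I)
    (hB : B ∈ M) : B ⊆ I :=
  fun x hx => ((mem_parts.1 h).2.2 x).2 ⟨B, hB, hx⟩

lemma nonempty_of_mem {I B : Finset (Fin n)} {M : Finset (Finset (Fin n))} (h : M ∈ parts I)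
    (hB : B ∈ M) : B.Nonempty :=
  (mem_parts.1 h).1 B hB

lemma erase_mem {J B : Finset (Fin n)} {M : Finset (Finset (Fin n))} (h : M ∈ parts J)
    (hB : B ∈ M) : M.erase B ∈ parts (J \ B) := by
  obtain ⟨h1, h2, h3⟩ := mem_parts.1 h
  refine mem_parts.2 ⟨fun C hC => h1 C (mem_of_mem_erase hC),
    fun C hC D hD => h2 C (mem_of_mem_erase hC) D (mem_of_mem_erase hD), fun x => ?_⟩
  rw [mem_sdiff, h3]
  constructor
  · rintro ⟨⟨C, hC, hx⟩, hxB⟩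
    exact ⟨C, mem_erase.2 ⟨fun e => hxB (e ▸ hx), hC⟩, hx⟩
  · rintro ⟨C, hC, hx⟩
    obtain ⟨hne, hC⟩ := mem_erase.1 hC
    exact ⟨⟨C, hC, hx⟩, Finset.disjoint_left.1 (h2 C hC B hB hne) hx⟩

lemma notMem_of_sdiff {J B : Finset (Fin n)} {N : Finset (Finset (Fin n))} (hB : B.Nonempty)
    (h : N ∈ parts (J \ B)) : B ∉ N := by
  intro hBN
  obtain ⟨x, hx⟩ := hB
  exact (mem_sdiff.1 (subset_of_mem h hBN hx)).2 hx

lemma insert_mem {J B : Finset (Fin n)} {N : Finset (Finset (Fin n))} (hB : B.Nonempty)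
    (hBJ : B ⊆ J) (h : N ∈ parts (J \ B)) : insert B N ∈ parts J := by
  obtain ⟨h1, h2, h3⟩ := mem_parts.1 h
  have hdis : ∀ C ∈ N, Disjoint C B := fun C hC =>
    Finset.disjoint_left.2 fun x hx => (mem_sdiff.1 (subset_of_mem h hC hx)).2
  refine mem_parts.2 ⟨?_, ?_, fun x => ?_⟩
  · intro C hC
    rcases mem_insert.1 hC with rfl | hC
    exacts [hB, h1 C hC]
  · intro C hC D hD hne
    rcases mem_insert.1 hC with rfl | hCN <;> rcases mem_insert.1 hD with rfl | hDN
    exacts [absurd rfl hne, (hdis D hDN).symm, hdis C hCN, h2 C hCN D hDN hne]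
  · have h3x := h3 x
    rw [mem_sdiff] at h3x
    rw [exists_mem_insert, ← h3x]
    constructor
    · intro hx
      by_cases hxB : x ∈ B
      exacts [Or.inl hxB, Or.inr ⟨hx, hxB⟩]
    · rintro (hx | hx)
      exacts [hBJ hx, hx.1]

lemma parts_empty : parts (∅ : Finset (Fin n)) = {∅} := by
  ext M
  rw [mem_singleton]
  constructor
  · intro h
    refine eq_empty_of_forall_notMem fun B hB => ?_
    obtain ⟨x, hx⟩ := nonempty_of_mem h hB
    exact notMem_empty x (subset_of_mem h hB hx)
  · rintro rfl
    exact mem_parts.2 (by simp)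

/-- Removing the distinguished block is a bijection from set partitions of `J` with a
distinguished block to pairs of a nonempty `B ⊆ J` and a set partition of `J \ B`. -/
lemma sum_block (J : Finset (Fin n)) (ψ : Finset (Fin n) → Finset (Finset (Fin n)) → R) :
    ∑ M ∈ parts J, ∑ B ∈ M, ψ B (M.erase B) =
      ∑ B ∈ J.powerset.filter (·.Nonempty), ∑ N ∈ parts (J \ B), ψ B N := by
  rw [Finset.sum_sigma', Finset.sum_sigma']
  refine Finset.sum_bij' (fun p _ => ⟨p.2, p.1.erase p.2⟩) (fun q _ => ⟨insert q.1 q.2, q.1⟩)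
    ?_ ?_ ?_ ?_ ?_
  · rintro ⟨M, B⟩ h
    obtain ⟨hM, hB⟩ := mem_sigma.1 h
    exact mem_sigma.2 ⟨mem_filter.2 ⟨mem_powerset.2 (subset_of_mem hM hB),
      nonempty_of_mem hM hB⟩, erase_mem hM hB⟩
  · rintro ⟨B, N⟩ h
    obtain ⟨hB, hN⟩ := mem_sigma.1 h
    obtain ⟨hBJ, hB⟩ := mem_filter.1 hB
    exact mem_sigma.2 ⟨insert_mem hB (mem_powerset.1 hBJ) hN, mem_insert_self _ _⟩
  · rintro ⟨M, B⟩ h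
    obtain ⟨hM, hB⟩ := mem_sigma.1 h
    simp only [insert_erase hB]
  · rintro ⟨B, N⟩ h
    obtain ⟨hB, hN⟩ := mem_sigma.1 h
    simp only [erase_insert (notMem_of_sdiff (mem_filter.1 hB).2 hN)]
  · rintro ⟨M, B⟩ h
    rfl

/-- Decomposition of a set partition of `I` by the block `A` containing a given point `i`. -/
lemma sum_point {I : Finset (Fin n)} {i : Fin n} (hi : i ∈ I)
    (φ : Finset (Finset (Fin n)) → R) :
    ∑ M ∈ parts I, φ M =
      ∑ A ∈ I.powerset.filter (i ∈ ·), ∑ N ∈ parts (I \ A), φ (insert A N) := by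
  have key := sum_block I (fun B N => if i ∈ B then φ (insert B N) else 0)
  have hl : ∑ M ∈ parts I, ∑ B ∈ M, (if i ∈ B then φ (insert B (M.erase B)) else 0) =
      ∑ M ∈ parts I, φ M := by
    refine sum_congr rfl fun M hM => ?_
    obtain ⟨h1, h2, h3⟩ := mem_parts.1 hM
    obtain ⟨B, hB, hiB⟩ := (h3 i).1 hi
    rw [Finset.sum_eq_single_of_mem B hB]
    · rw [if_pos hiB, insert_erase hB]
    · intro C hC hne
      exact if_neg fun hiC => Finset.disjoint_left.1 (h2 C hC B hB hne) hiC hiB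
  rw [← hl, key]
  have hr : ∀ B ∈ I.powerset.filter (·.Nonempty),
      ∑ N ∈ parts (I \ B), (if i ∈ B then φ (insert B N) else 0) =
        if i ∈ B then ∑ N ∈ parts (I \ B), φ (insert B N) else 0 := by
    intro B _
    split_ifs <;> simp
  rw [sum_congr rfl hr, ← sum_filter, filter_filter]
  refine sum_congr (filter_congr fun B _ => ?_) fun _ _ => rfl
  exact ⟨fun h => h.2, fun h => ⟨⟨i, h⟩, h⟩⟩

/-- The exponential of `f`: the sum over all set partitions of the products of `f` over blocks. -/
noncomputable def expSum (f : Finset (Fin n) → R) (I : Finset (Fin n)) : R :=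
  ∑ M ∈ parts I, ∏ B ∈ M, f B

/-- The logarithm of `1 + h`, as a sum over set partitions. Only its values at nonempty sets are
meaningful: at `∅` the truncated subtraction gives `1`. -/
noncomputable def logSum (h : Finset (Fin n) → R) (I : Finset (Fin n)) : R :=
  ∑ M ∈ parts I, (-1 : R) ^ (M.card - 1) * ((M.card - 1).factorial : R) * ∏ B ∈ M, h B

/-- The convolution inverse of `1 + h`, as a sum over set partitions. -/
noncomputable def invSum (h : Finset (Fin n) → R) (I : Finset (Fin n)) : R :=
  ∑ M ∈ parts I, (-1 : R) ^ M.card * (M.card.factorial : R) * ∏ B ∈ M, h B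

/-- The set function `1 + h`, where `1` is the convolution unit and the value of `h` at `∅` is
disregarded: it is `1` at `∅` and agrees with `h` elsewhere. -/
noncomputable def unitExt (h : Finset (Fin n) → R) (I : Finset (Fin n)) : R :=
  if I = ∅ then 1 else h I

lemma unitExt_of_nonempty (h : Finset (Fin n) → R) {I : Finset (Fin n)} (hI : I.Nonempty) :
    unitExt h I = h I :=
  if_neg hI.ne_empty

lemma expSum_empty (f : Finset (Fin n) → R) : expSum f ∅ = 1 := by
  simp [expSum, parts_empty]

lemma invSum_empty (h : Finset (Fin n) → R) : invSum h ∅ = 1 := by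
  simp [invSum, parts_empty]

lemma expSum_recursion (f : Finset (Fin n) → R) {I : Finset (Fin n)} {i : Fin n} (hi : i ∈ I) :
    expSum f I = ∑ A ∈ I.powerset.filter (i ∈ ·), f A * expSum f (I \ A) := by
  rw [expSum, sum_point hi]
  refine sum_congr rfl fun A hA => ?_
  rw [expSum, mul_sum]
  refine sum_congr rfl fun N hN => ?_
  rw [prod_insert (notMem_of_sdiff ⟨i, (mem_filter.1 hA).2⟩ hN)]

lemma logSum_eq (h : Finset (Fin n) → R) {I : Finset (Fin n)} {i : Fin n} (hi : i ∈ I) :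
    logSum h I = ∑ A ∈ I.powerset.filter (i ∈ ·), h A * invSum h (I \ A) := by
  rw [logSum, sum_point hi]
  refine sum_congr rfl fun A hA => ?_
  rw [invSum, mul_sum]
  refine sum_congr rfl fun N hN => ?_
  have hAN := notMem_of_sdiff ⟨i, (mem_filter.1 hA).2⟩ hN
  rw [prod_insert hAN, card_insert_of_notMem hAN, Nat.add_sub_cancel]
  ring

/-- Each term of `-invSum h J` is a product of `|M|` and a term with `(|M| - 1)!`; the factor `|M|`
counts the choices of a distinguished block. -/
lemma neg_invSum_eq (h : Finset (Fin n) → R) {J : Finset (Fin n)} (hJ : J.Nonempty) :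
    -invSum h J = ∑ B ∈ J.powerset.filter (·.Nonempty), h B * invSum h (J \ B) := by
  have key := sum_block J (fun B N =>
    h B * ((-1 : R) ^ N.card * (N.card.factorial : R) * ∏ C ∈ N, h C))
  simp only [invSum, mul_sum]
  rw [← key, ← sum_neg_distrib]
  refine sum_congr rfl fun M hM => ?_
  have hne : M.Nonempty := by
    obtain ⟨x, hx⟩ := hJ
    obtain ⟨B, hB, -⟩ := ((mem_parts.1 hM).2.2 x).1 hx
    exact ⟨B, hB⟩
  obtain ⟨k, hk⟩ : ∃ k, M.card = k + 1 := Nat.exists_eq_succ_of_ne_zero hne.card_pos.ne'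
  have hterm : ∀ B ∈ M, h B * ((-1 : R) ^ (M.erase B).card * ((M.erase B).card.factorial : R) *
      ∏ C ∈ M.erase B, h C) = (-1 : R) ^ k * (k.factorial : R) * ∏ C ∈ M, h C := by
    intro B hB
    rw [card_erase_of_mem hB, hk, Nat.add_sub_cancel, ← mul_prod_erase M h hB]
    ring
  rw [sum_congr rfl hterm, sum_const, hk, nsmul_eq_mul, Nat.factorial_succ, pow_succ]
  push_cast
  ring

lemma invSum_mul_unitExt (h : Finset (Fin n) → R) {J : Finset (Fin n)} (hJ : J.Nonempty) :
    ∑ B ∈ J.powerset, unitExt h B * invSum h (J \ B) = 0 := by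
  rw [← sum_filter_add_sum_filter_not J.powerset (·.Nonempty)]
  have h1 : ∑ B ∈ J.powerset.filter (·.Nonempty), unitExt h B * invSum h (J \ B) =
      -invSum h J := by
    rw [neg_invSum_eq h hJ]
    exact sum_congr rfl fun B hB => by rw [unitExt_of_nonempty h (mem_filter.1 hB).2]
  have h2 : J.powerset.filter (¬ ·.Nonempty) = {∅} := by
    ext B
    simp only [mem_filter, mem_powerset, not_nonempty_iff_eq_empty, mem_singleton]
    exact ⟨fun h => h.2, fun h => ⟨h ▸ empty_subset J, h⟩⟩
  rw [h1, h2, sum_singleton, sdiff_empty, unitExt, if_pos rfl]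
  ring

/-- The pair `(logSum h, h)` satisfies the recursion characterising an exponential. Expanding
`logSum h A` over the subsets `B ∋ i` of `A` and summing over `A` first, the inner sum is the
convolution of `invSum h` and `unitExt h` at `I \ B`, which vanishes unless `B = I`. -/
lemma logSum_recursion (h : Finset (Fin n) → R) {I : Finset (Fin n)} {i : Fin n} (hi : i ∈ I) :
    h I = ∑ A ∈ I.powerset.filter (i ∈ ·), logSum h A * unitExt h (I \ A) := by
  have hexp : ∀ A ∈ I.powerset.filter (i ∈ ·), logSum h A * unitExt h (I \ A) =
      ∑ B ∈ A.powerset.filter (i ∈ ·), h B * (invSum h (A \ B) * unitExt h (I \ A)) := by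
    intro A hA
    rw [logSum_eq h (mem_filter.1 hA).2, sum_mul]
    exact sum_congr rfl fun B _ => by ring
  rw [sum_congr rfl hexp]
  have hcomm : ∀ A B : Finset (Fin n),
      (A ∈ I.powerset.filter (i ∈ ·) ∧ B ∈ A.powerset.filter (i ∈ ·)) ↔
        (A ∈ I.powerset.filter (B ⊆ ·) ∧ B ∈ I.powerset.filter (i ∈ ·)) := by
    intro A B
    simp only [mem_filter, mem_powerset]
    exact ⟨fun ⟨⟨a, _⟩, b, c⟩ => ⟨⟨a, b⟩, b.trans a, c⟩,
      fun ⟨⟨a, b⟩, _, c⟩ => ⟨⟨a, b c⟩, b, c⟩⟩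
  rw [sum_comm' hcomm]
  -- The complement `C = I \ A` ranges over all subsets of `I \ B`.
  have hinner : ∀ B ∈ I.powerset.filter (i ∈ ·),
      ∑ A ∈ I.powerset.filter (B ⊆ ·), h B * (invSum h (A \ B) * unitExt h (I \ A)) =
        h B * ∑ C ∈ (I \ B).powerset, unitExt h C * invSum h ((I \ B) \ C) := by
    intro B hB
    have hBI := mem_powerset.1 (mem_filter.1 hB).1
    rw [← mul_sum]
    congr 1
    refine sum_bij' (fun A _ => I \ A) (fun C _ => I \ C) ?_ ?_ ?_ ?_ ?_
    · intro A hA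
      exact mem_powerset.2 (sdiff_subset_sdiff subset_rfl (mem_filter.1 hA).2)
    · intro C hC
      rw [mem_powerset] at hC
      refine mem_filter.2 ⟨mem_powerset.2 sdiff_subset, fun x hx => ?_⟩
      exact mem_sdiff.2 ⟨hBI hx, fun hxC => (mem_sdiff.1 (hC hxC)).2 hx⟩
    · intro A hA
      exact Finset.sdiff_sdiff_eq_self (mem_powerset.1 (mem_filter.1 hA).1)
    · intro C hC
      exact Finset.sdiff_sdiff_eq_self ((mem_powerset.1 hC).trans sdiff_subset)
    · intro A hA
      have hAI := mem_powerset.1 (mem_filter.1 hA).1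
      have : (I \ B) \ (I \ A) = A \ B := by
        rw [sdiff_right_comm, Finset.sdiff_sdiff_eq_self hAI]
      rw [this, mul_comm]
  rw [sum_congr rfl hinner,
    sum_eq_single_of_mem I (mem_filter.2 ⟨mem_powerset_self I, hi⟩)]
  · simp [unitExt, invSum_empty]
  · intro B hB hne
    have hBI := mem_powerset.1 (mem_filter.1 hB).1
    rw [invSum_mul_unitExt h (sdiff_nonempty.2 fun hIB => hne (hBI.antisymm hIB)), mul_zero]

/-- Separation of the term `A = I` from the recursion, as a proper subset `A ∋ i` and its
complement are both smaller than `I`. -/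
lemma sum_point_split {I : Finset (Fin n)} {i : Fin n} (hi : i ∈ I) (F : Finset (Fin n) → R) :
    ∑ A ∈ I.powerset.filter (i ∈ ·), F A =
      F I + ∑ A ∈ I.ssubsets.filter (i ∈ ·), F A := by
  have : I.powerset.filter (i ∈ ·) = insert I (I.ssubsets.filter (i ∈ ·)) := by
    ext A
    simp only [mem_filter, mem_powerset, mem_insert, mem_ssubsets]
    constructor
    · rintro ⟨h, hA⟩
      rcases h.eq_or_ssubset with h | h
      exacts [Or.inl h, Or.inr ⟨h, hA⟩]
    · rintro (rfl | h)
      exacts [⟨subset_rfl, hi⟩, ⟨h.1.subset, h.2⟩]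
  rw [this, sum_insert (by simp)]

/-- The exponential of the logarithm of `1 + h` is `1 + h`. -/
lemma expSum_logSum (h : Finset (Fin n) → R) (I : Finset (Fin n)) :
    expSum (logSum h) I = unitExt h I := by
  induction I using Finset.strongInduction with
  | H I ih =>
    rcases I.eq_empty_or_nonempty with rfl | hI
    · rw [expSum_empty, unitExt, if_pos rfl]
    · obtain ⟨i, hi⟩ := hI
      rw [unitExt_of_nonempty h ⟨i, hi⟩, logSum_recursion h hi, expSum_recursion _ hi]
      refine sum_congr rfl fun A hA => ?_
      obtain ⟨hAI, hiA⟩ := mem_filter.1 hA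
      rw [ih _ (sdiff_ssubset (mem_powerset.1 hAI) ⟨i, hiA⟩)]

/-- The exponential is injective on set functions restricted to nonempty sets. -/
lemma eq_of_expSum_eq {f g : Finset (Fin n) → R} (hfg : ∀ I, expSum f I = expSum g I)
    (I : Finset (Fin n)) : I.Nonempty → f I = g I := by
  induction I using Finset.strongInduction with
  | H I ih =>
    rintro ⟨i, hi⟩
    have key := hfg I
    rw [expSum_recursion f hi, expSum_recursion g hi, sum_point_split hi, sum_point_split hi,
      sdiff_self, bot_eq_empty, expSum_empty, expSum_empty, mul_one, mul_one] at key
    have hsum : ∑ A ∈ I.ssubsets.filter (i ∈ ·), f A * expSum f (I \ A) =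
        ∑ A ∈ I.ssubsets.filter (i ∈ ·), g A * expSum g (I \ A) := by
      refine sum_congr rfl fun A hA => ?_
      obtain ⟨hAI, hiA⟩ := mem_filter.1 hA
      rw [ih A (mem_ssubsets.1 hAI) ⟨i, hiA⟩, hfg]
    rw [hsum] at key
    exact add_right_cancel key

lemma expSum_congr {f g : Finset (Fin n) → R} (hfg : ∀ I : Finset (Fin n), I.Nonempty → f I = g I)
    (I : Finset (Fin n)) : expSum f I = expSum g I :=
  sum_congr rfl fun _ hM => prod_congr rfl fun B hB => hfg B (nonempty_of_mem hM hB)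

end PartitionInversion

open PartitionInversion

/-- Inclusion–exclusion (Möbius inversion on the partition lattice): `H•` and `H∘` satisfy
`H•(I) = ∑_{M ⊢ I} ∏_{B ∈ M} H∘(B)` for all nonempty `I` if and only if
`H∘(I) = ∑_{M ⊢ I} (−1)^{|M|−1}(|M|−1)! ∏_{B ∈ M} H•(B)` for all nonempty `I`. -/
theorem partition_moebius_inversion (n : ℕ) (R : Type*) [CommRing R] [Algebra ℚ R]
    (Hd Hc : Finset (Fin n) → R) :
    (∀ I : Finset (Fin n), I.Nonempty →
        Hd I = ∑ M ∈ (I.powerset.powerset).filter (IsSetPartition I), ∏ B ∈ M, Hc B)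
    ↔ (∀ I : Finset (Fin n), I.Nonempty →
        Hc I = ∑ M ∈ (I.powerset.powerset).filter (IsSetPartition I),
          (-1 : R) ^ (M.card - 1) * ((M.card - 1).factorial : R) * ∏ B ∈ M, Hd B) := by
  change (∀ I : Finset (Fin n), I.Nonempty → Hd I = expSum Hc I) ↔
    (∀ I : Finset (Fin n), I.Nonempty → Hc I = logSum Hd I)
  constructor
  · intro H
    refine eq_of_expSum_eq fun I => ?_
    rw [expSum_logSum]
    rcases I.eq_empty_or_nonempty with rfl | hI
    · rw [expSum_empty, unitExt, if_pos rfl]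
    · rw [unitExt_of_nonempty Hd hI, H I hI]
  · intro H I hI
    rw [expSum_congr H, expSum_logSum, unitExt_of_nonempty Hd hI]
end

section
/- Let V be a K-vector space of K-valued sequences on ℤ_{>0} admitting a basis (ψ_k)_{k≥1} such that ψ_k(μ) = δ_{k,μ} for all 1 ≤ μ ≤ k (triangularity). Let F: (ℤ_{>0})^n → K be symmetric in its n arguments, and suppose there is a fixed finite-dimensional subspace V_N = span(ψ_1,...,ψ_N) such that for all μ_2,...,μ_n, the function μ_1 ↦ F(μ_1, μ_2,...,μ_n) lies in V_N. Then F lies in the n-fold tensor product: there exist coefficients c_{k_1,...,k_n} ∈ K, nonzero for only finitely many tuples, with F(μ_1,...,μ_n) = Σ c_{k_1,...,k_n} ψ_{k_1}(μ_1)···ψ_{k_n}(μ_n). -/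
open Finset

/-!
By triangularity, the `N × N` matrix of values of `ψ_1, …, ψ_N` at the points `1, …, N` is
unitriangular, hence invertible, so the space `V_N` has a Lagrange basis
`L_1, …, L_N` for these points: every `f ∈ V_N` satisfies `f(x) = ∑ j, L_j(x) f(j)`
(`exists_lagrange`). By symmetry, all sections of `F`, in whichever variable, lie in `V_N`, so this
interpolation formula may be applied in each variable in turn (`tensor_interpolation`):
`F(μ) = ∑_j F(j_1, …, j_n) L_{j_1}(μ_1) ⋯ L_{j_n}(μ_n)`, a finite sum.
Expanding each `L_j` in the `ψ_k` gives the coefficients.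
-/

/-- If interpolation at the points `p j` with cardinal functions `L j` reproduces `G` in each
variable separately, then tensor product interpolation on the grid of the points `p j`
reproduces `G`. -/
theorem tensor_interpolation {K X ι : Type*} [Field K] [Fintype ι] (p : ι → X) (L : ι → X → K) :
    ∀ (m : ℕ) (G : (Fin m → X) → K),
      (∀ (i : Fin m) (μ : Fin m → X) (x : X),
        G (Function.update μ i x) = ∑ j, L j x * G (Function.update μ i (p j))) →
      ∀ μ : Fin m → X,
        G μ = ∑ j : Fin m → ι, G (fun i => p (j i)) * ∏ i, L (j i) (μ i) := by
  intro m
  induction m with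
  | zero =>
    intro G _ μ
    simp only [univ_unique, sum_singleton, univ_eq_empty, prod_empty, mul_one]
    congr 1
    exact Subsingleton.elim _ _
  | succ m ih =>
    intro G hG μ
    have h0 : G μ = ∑ j, L j (μ 0) * G (Fin.cons (p j) (Fin.tail μ)) := by
      have h := hG 0 μ (μ 0)
      rw [Function.update_eq_self] at h
      rw [h]
      refine sum_congr rfl fun j _ => ?_
      rw [← Fin.update_cons_zero (μ 0) (Fin.tail μ), Fin.cons_self_tail]
    have h1 : ∀ j, G (Fin.cons (p j) (Fin.tail μ)) =
        ∑ k : Fin m → ι, G (Fin.cons (p j) (fun i => p (k i))) *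
          ∏ i, L (k i) (μ i.succ) := by
      intro j
      refine ih (fun ν => G (Fin.cons (p j) ν)) (fun i ν x => ?_) (Fin.tail μ)
      simp only [Fin.cons_update]
      exact hG i.succ _ x
    rw [h0, ← (Fin.consEquiv fun _ : Fin (m + 1) => ι).sum_comp, Fintype.sum_prod_type]
    refine sum_congr rfl fun j _ => ?_
    rw [h1, mul_sum]
    refine sum_congr rfl fun k _ => ?_
    have h2 : (fun i => p ((Fin.cons j k : Fin (m + 1) → ι) i)) =
        (Fin.cons (p j) (fun i => p (k i)) : Fin (m + 1) → X) := by
      funext i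
      refine Fin.cases ?_ (fun i => ?_) i <;> simp
    simp only [Fin.consEquiv_apply, Fin.prod_univ_succ, Fin.cons_zero, Fin.cons_succ, h2]
    ring

/-- The coefficients `A k j` of the Lagrange basis `L_j = ∑ k, A k j * ψ_k` of `V_N` at the points
`1, …, N`. Indices in `Fin N` are shifted by one. -/
theorem exists_lagrange {K : Type*} [Field K] (N : ℕ) (ψ : ℕ → ℕ → K)
    (hψ : ∀ k μ : ℕ, 1 ≤ μ → μ ≤ k → ψ k μ = if μ = k then 1 else 0) :
    ∃ A : Fin N → Fin N → K, ∀ (b : Fin N → K) (x : ℕ),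
      ∑ k, b k * ψ (k + 1) x =
        ∑ j, (∑ k, A k j * ψ (k + 1) x) * ∑ k, b k * ψ (k + 1) (j + 1) := by
  let M : Matrix (Fin N) (Fin N) K := Matrix.of fun j k => ψ (k + 1) (j + 1)
  have hdet : M.det = 1 := by
    rw [Matrix.det_of_isLowerTriangular]
    · refine prod_eq_one fun i _ => ?_
      simp [M, hψ]
    · intro i j hij
      have hij' : (i : ℕ) < j := hij
      simp only [M, Matrix.of_apply]
      rw [hψ _ _ (by omega) (by omega), if_neg (by omega)]
  -- The ascription selects the matrix inverse over the pointwise inverse of functions.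
  refine ⟨(M⁻¹ : Matrix (Fin N) (Fin N) K), fun b x => ?_⟩
  have hb : M⁻¹.mulVec (M.mulVec b) = b := by
    rw [Matrix.mulVec_mulVec, Matrix.nonsing_inv_mul _ (by simp [hdet]), Matrix.one_mulVec]
  have hM : ∀ j : Fin N, ∑ k, b k * ψ (k + 1) (j + 1) = M.mulVec b j := by
    intro j
    simp [Matrix.mulVec, dotProduct, M, mul_comm]
  simp only [hM, sum_mul]
  rw [sum_comm]
  refine sum_congr rfl fun k _ => ?_
  conv_lhs => rw [← hb]
  rw [Matrix.mulVec, dotProduct, sum_mul]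
  exact sum_congr rfl fun j _ => mul_right_comm _ _ _

/-- If `F` is a symmetric function of `n` positive-integer arguments, the sequences `ψ_k`
are triangular (`ψ_k(μ) = δ_{kμ}` for `1 ≤ μ ≤ k`), and every first-variable section of `F`
lies in the span of `ψ_1, …, ψ_N`, then `F` lies in the `n`-fold tensor product: there are
finitely many nonzero coefficients `c` with `F(μ) = ∑ c_{k_1…k_n} ψ_{k_1}(μ_1) ⋯ ψ_{k_n}(μ_n)`. -/
theorem symmetric_section_tensor_decomposition
    (K : Type*) [Field K] (n N : ℕ) (hn : 0 < n) (hN : 0 < N)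
    (ψ : ℕ → ℕ → K)
    (hψ : ∀ k μ : ℕ, 1 ≤ μ → μ ≤ k → ψ k μ = if μ = k then 1 else 0)
    (F : (Fin n → ℕ) → K)
    (hsym : ∀ (σ : Equiv.Perm (Fin n)) (μ : Fin n → ℕ), F (μ ∘ σ) = F μ)
    (hmem : ∀ μ : Fin n → ℕ, (∀ i, 1 ≤ μ i) →
      ∃ b : ℕ → K, ∀ μ₁ : ℕ, 1 ≤ μ₁ →
        F (Function.update μ ⟨0, hn⟩ μ₁) = ∑ k ∈ Finset.Icc 1 N, b k * ψ k μ₁) :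
    ∃ c : (Fin n → ℕ) →₀ K, ∀ μ : Fin n → ℕ, (∀ i, 1 ≤ μ i) →
      F μ = c.sum fun k v => v * ∏ i, ψ (k i) (μ i) := by
  obtain ⟨A, hA⟩ := exists_lagrange N ψ hψ
  have hsec : ∀ (i : Fin n) (μ : Fin n → ℕ), (∀ i, 1 ≤ μ i) →
      ∃ b : Fin N → K, ∀ x : ℕ, 1 ≤ x →
        F (Function.update μ i x) = ∑ k, b k * ψ (k + 1) x := by
    intro i μ hμ
    obtain ⟨b, hb⟩ := hmem (μ ∘ Equiv.swap ⟨0, hn⟩ i) fun _ => hμ _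
    refine ⟨fun k => b (k + 1), fun x hx => ?_⟩
    have hswap : Function.update μ i x ∘ Equiv.swap ⟨0, hn⟩ i =
        Function.update (μ ∘ Equiv.swap ⟨0, hn⟩ i) ⟨0, hn⟩ x := by
      rw [Function.update_comp_equiv]
      simp
    rw [← hsym (Equiv.swap ⟨0, hn⟩ i), hswap, hb x hx,
      Fin.sum_univ_eq_sum_range (fun k => b (k + 1) * ψ (k + 1) x), range_eq_Ico,
      sum_Ico_add' (fun k => b k * ψ k x) 0 N 1]
    rfl
  -- The hypotheses concern positive arguments only, so interpolation takes place over `ℕ+`.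
  let L : Fin N → ℕ+ → K := fun j x => ∑ k, A k j * ψ (k + 1) x
  have hF := tensor_interpolation (fun j : Fin N => Nat.succPNat j) L n
    (fun μ => F fun i => (μ i : ℕ)) (by
      intro i μ x
      obtain ⟨b, hb⟩ := hsec i (fun i => μ i) fun i => (μ i).pos
      have hup : ∀ y : ℕ+, (fun l => ((Function.update μ i y l : ℕ+) : ℕ)) =
          Function.update (fun l => (μ l : ℕ)) i y := by
        intro y
        funext l
        by_cases h : l = i
        · subst h; simp
        · simp [h]
      simp only [hup]
      rw [hb x x.pos, hA]
      refine sum_congr rfl fun j _ => ?_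
      rw [hb (Nat.succPNat j) (Nat.succPNat j).pos]
      rfl)
  refine ⟨∑ k : Fin n → Fin N, Finsupp.single (fun i => (k i : ℕ) + 1)
    (∑ j : Fin n → Fin N, F (fun i => (j i : ℕ) + 1) * ∏ i, A (k i) (j i)), fun μ hμ => ?_⟩
  rw [← Finsupp.sum_finsetSum_index (by simp) (by intros; ring)]
  simp only [Finsupp.sum_single_index, zero_mul]
  have h := hF fun i => ⟨μ i, hμ i⟩
  simp only [PNat.mk_coe, Nat.succPNat_coe, Nat.succ_eq_add_one, L] at h
  rw [h]
  simp only [prod_univ_sum, Fintype.piFinset_univ, mul_sum, sum_mul]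
  rw [sum_comm]
  refine sum_congr rfl fun k _ => sum_congr rfl fun j _ => ?_
  rw [prod_mul_distrib, mul_assoc]
end
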